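/- For any relational frame (X,◁), the following are equivalent: (a) for all c_◁-fixpoints A and B, if A ∩ B equals the set of absurd states (which is the bottom element c_◁(∅) of the lattice of c_◁-fixpoints), then A ⊆ ¬_◁B; (b) ◁ is weakly compossible, i.e., for all x ∈ X and all y with y ◁ x, there is a non-absurd z that pre-refines both y and x. -/

import Mathlib

/-- The closure operation `c_◁` on subsets of a relational frame `(X, ◁)`. -/
def cl {X : Type*} (lt : X → X → Prop) (A : Set X) : Set X :=
  {x | ∀ x', lt x' x → ∃ x'', lt x' x'' ∧ x'' ∈ A}

/-- The negation operation `¬_◁` on subsets of a relational frame `(X, ◁)`. -/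
def negSet {X : Type*} (lt : X → X → Prop) (A : Set X) : Set X :=
  {x | ∀ y, lt y x → y ∉ A}

/-- `x` pre-refines `y`: everything open to `x` is open to `y`. -/
def preRefines {X : Type*} (lt : X → X → Prop) (x y : X) : Prop :=
  ∀ z, lt z x → lt z y

/-- `x` is absurd: nothing is open to `x`. -/
def IsAbsurd {X : Type*} (lt : X → X → Prop) (x : X) : Prop :=
  ¬ ∃ y, lt y x

/-!
The states pre-refining `x` form the least fixpoint `cl lt {x}` containing `x`, so weak
compossibility says that `cl lt {x} ∩ cl lt {y}` is strictly above the bottom fixpoint whenever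
`y ◁ x`. This is the contrapositive of the negation law for these principal fixpoints, and the law
for arbitrary fixpoints `A ∋ x` and `B ∋ y` reduces to it because `cl lt {x} ⊆ A` and
`cl lt {y} ⊆ B`.
-/

section

variable {X : Type*} {lt : X → X → Prop} {A B : Set X} {x y : X}

theorem subset_cl : A ⊆ cl lt A :=
  fun x hx _ hx' => ⟨x, hx', hx⟩

theorem cl_mono (h : A ⊆ B) : cl lt A ⊆ cl lt B := by
  intro x hx x' hx'
  obtain ⟨x'', hx'', hA⟩ := hx x' hx'
  exact ⟨x'', hx'', h hA⟩

theorem cl_cl : cl lt (cl lt A) = cl lt A := by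
  refine Set.Subset.antisymm (fun x hx x' hx' => ?_) subset_cl
  obtain ⟨x'', hx'', hA⟩ := hx x' hx'
  exact hA x' hx''

theorem mem_cl_empty : x ∈ cl lt ∅ ↔ IsAbsurd lt x := by
  simp [cl, IsAbsurd]

theorem mem_cl_singleton : x ∈ cl lt {y} ↔ preRefines lt x y := by
  simp [cl, preRefines]

theorem self_mem_cl_singleton : x ∈ cl lt {x} :=
  subset_cl (Set.mem_singleton x)

theorem cl_singleton_subset (hA : cl lt A = A) (hx : x ∈ A) : cl lt {x} ⊆ A :=
  hA ▸ cl_mono (Set.singleton_subset_iff.2 hx)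

theorem exists_not_isAbsurd_preRefines_iff :
    (∃ z, ¬ IsAbsurd lt z ∧ preRefines lt z y ∧ preRefines lt z x) ↔
      ¬ cl lt {x} ∩ cl lt {y} ⊆ cl lt ∅ := by
  simp only [Set.not_subset, Set.mem_inter_iff, mem_cl_singleton, mem_cl_empty]
  exact exists_congr fun z => by tauto

end

theorem stmt_9 (X : Type*) [Nonempty X] (lt : X → X → Prop) :
    (∀ A B : Set X, cl lt A = A → cl lt B = B → A ∩ B = cl lt ∅ → A ⊆ negSet lt B) ↔
    (∀ x y : X, lt y x →
      ∃ z, ¬ IsAbsurd lt z ∧ preRefines lt z y ∧ preRefines lt z x) := by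
  simp only [exists_not_isAbsurd_preRefines_iff]
  constructor
  · intro h x y hyx hxy
    have bot_le : cl lt ∅ ⊆ cl lt {x} ∩ cl lt {y} :=
      Set.subset_inter (cl_mono (Set.empty_subset _)) (cl_mono (Set.empty_subset _))
    exact h _ _ cl_cl cl_cl (hxy.antisymm bot_le) self_mem_cl_singleton y hyx
      self_mem_cl_singleton
  · intro h A B hA hB hAB x hx y hyx hy
    have le_inter : cl lt {x} ∩ cl lt {y} ⊆ A ∩ B :=
      Set.inter_subset_inter (cl_singleton_subset hA hx) (cl_singleton_subset hB hy)
    exact h x y hyx (le_inter.trans hAB.subset)
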